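/- If D is a digraph of order n, then dG(D) + dG(D^c) ≤ ⌊(5n+4)/4⌋, where D^c denotes the complement of D. -/

import Mathlib

/-!
The proof keeps only a weak consequence of greediness. Write `E u v` when both arcs between `u` and
`v` are in `D`, and `F u v` when both are in the complement. If `f` is a greedy coloring of `D`,
then a vertex `v` closes a directed cycle with every earlier class, hence has an out-neighbour and
an in-neighbour there; so if `v` is `F`-related to all vertices of that class except `u`, then
`E v u`. This is the predicate `Dominated E F f`; a greedy coloring `g` of the complement satisfies
`Dominated F E g`, and the rest of the argument is symmetric in the two.

Let `S` and `T` be the sets of vertices forming singleton classes of `f` and of `g`. Any two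
vertices of `S` are `E`-related and any two of `T` are `F`-related, so `|S ∩ T| ≤ 1`. Let `Z` be the
set of vertices outside `T` whose `f`-class is a pair completed by a vertex of `T`, and let `Y` be
its analogue for `g` and `S`. Counting class by class (`four_mul_card_image`) gives
`4 k + |T| ≤ 2 n + 2 |S| + |Z| + d` with `k` the number of colors of `f`, where `d ≤ 2` accounts
for the at most one class contained in `T`; symmetrically
`4 l + |S| ≤ 2 n + 2 |T| + |Y| + d'`. As `Y` and `Z` avoid `S ∪ T`, adding up yields
`4 (k + l) ≤ 5 n + |S ∩ T| + |Y ∩ Z| + d + d'`. A local analysis shows `|Y ∩ Z| ≤ 1`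
(`pairs_inter_unique`), and that `d = 2` or `d' = 2` forces both `S ∩ T` and `Y ∩ Z` to be empty, so the error
term is at most `4`.
-/

/-
Common definitions.

A digraph `D : Digraph V` on a finite vertex type `V` is loopless when
`∀ v, ¬ D.Adj v v` (this appears as a hypothesis in the theorems below).
-/

namespace Paper

open Function

variable {V : Type*}

/-- A set `S` of vertices of `D` is acyclic if the arc relation restricted to `S`
admits no vertex with a nonempty directed walk from itself back to itself
(i.e. the subdigraph induced on `S` has no directed cycle). -/
def AcyclicSet (D : Digraph V) (S : Set V) : Prop :=
  ∀ v : V, ¬ Relation.TransGen (fun a b => a ∈ S ∧ b ∈ S ∧ D.Adj a b) v v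

/-- An acyclic coloring: every color class is acyclic. -/
def IsAcyclicColoring (D : Digraph V) {k : ℕ} (c : V → Fin k) : Prop :=
  ∀ i : Fin k, AcyclicSet D {v | c v = i}

/-- A complete coloring: for every ordered pair of distinct colors there is an arc
from a vertex of the first color to a vertex of the second color. -/
def IsCompleteColoring (D : Digraph V) {k : ℕ} (c : V → Fin k) : Prop :=
  ∀ i j : Fin k, i ≠ j → ∃ u v : V, D.Adj u v ∧ c u = i ∧ c v = j

/-- The dichromatic number `dc(D)`: the least number of colors in an acyclic coloring. -/
noncomputable def dichromatic (D : Digraph V) [Fintype V] : ℕ :=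
  sInf {k : ℕ | ∃ c : V → Fin k, IsAcyclicColoring D c}

/-- The diachromatic number `dac(D)`: the largest number of colors in an acyclic
complete coloring (a coloring "with `k` colors" uses all `k` colors, i.e. is surjective). -/
noncomputable def diachromatic (D : Digraph V) [Fintype V] : ℕ :=
  sSup {k : ℕ | ∃ c : V → Fin k,
    Surjective c ∧ IsAcyclicColoring D c ∧ IsCompleteColoring D c}

/-- The color (a positive integer; `1` is the first color) that the greedy algorithm,
run along the vertex ordering `e` (position `0` first), assigns to the vertex in
position `i`: namely the smallest positive color whose current class stays acyclic
after adding this vertex (a fresh color has an empty class, so for a loopless digraph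
this in particular uses a new color exactly when the vertex forms a directed cycle
with every currently used class). -/
noncomputable def greedyColorAt (D : Digraph V) [Fintype V]
    (e : Fin (Fintype.card V) ≃ V) (i : Fin (Fintype.card V)) : ℕ :=
  sInf {c : ℕ | 1 ≤ c ∧
    AcyclicSet D (insert (e i)
      {v : V | ∃ j : Fin (Fintype.card V), ∃ _ : j < i, e j = v ∧ greedyColorAt D e j = c})}
termination_by i.val
decreasing_by exact ‹_›

/-- The greedy coloring of `D` with respect to the vertex ordering `e`. -/
noncomputable def greedyColoring (D : Digraph V) [Fintype V]
    (e : Fin (Fintype.card V) ≃ V) : V → ℕ :=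
  fun v => greedyColorAt D e (e.symm v)

/-- The number of colors used by the greedy coloring with respect to `e`. -/
noncomputable def greedyCount (D : Digraph V) [Fintype V]
    (e : Fin (Fintype.card V) ≃ V) : ℕ :=
  (Finset.univ.image (greedyColoring D e)).card

/-- The digrundy number `dG(D)`: the largest number of colors used by a greedy
coloring, over all orderings of the vertices. -/
noncomputable def digrundy (D : Digraph V) [Fintype V] : ℕ :=
  sSup {k : ℕ | ∃ e : Fin (Fintype.card V) ≃ V, greedyCount D e = k}

/-- The complement of a digraph: arcs are exactly the ordered pairs of distinct
vertices that are not arcs of `D`. -/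
def digraphCompl (D : Digraph V) : Digraph V :=
  ⟨fun u v => u ≠ v ∧ ¬ D.Adj u v⟩

/-- The maximum out-degree `Δ⁺(D)`. -/
noncomputable def maxOutDegree (D : Digraph V) [Fintype V] : ℕ :=
  ⨆ v : V, {u : V | D.Adj v u}.ncard

/-- The maximum in-degree `Δ⁻(D)`. -/
noncomputable def maxInDegree (D : Digraph V) [Fintype V] : ℕ :=
  ⨆ v : V, {u : V | D.Adj u v}.ncard

/-- The clique number `ω(D)`: the maximum size of a set of vertices every two of
which are joined by arcs in both directions. -/
noncomputable def cliqueNumber (D : Digraph V) [Fintype V] : ℕ :=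
  sSup {k : ℕ | ∃ S : Finset V, S.card = k ∧ ∀ u ∈ S, ∀ v ∈ S, u ≠ v → D.Adj u v}

/-- The subdigraph of `D` induced on a set `S` of vertices. -/
def induceD (D : Digraph V) (S : Set V) : Digraph S :=
  ⟨fun u v => D.Adj u v⟩

/-- A parsimonious coloring along the vertex ordering `e`: an acyclic coloring, built
along `e`, in which each vertex must receive an already-used color whenever some
existing color class remains acyclic upon adding the vertex, and receives the smallest
unused positive integer only if adding it to every existing class creates a directed
cycle. -/
def IsParsimonious (D : Digraph V) [Fintype V]
    (e : Fin (Fintype.card V) ≃ V) (c : V → ℕ) : Prop :=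
  (∀ i : ℕ, AcyclicSet D {v | c v = i}) ∧
  ∀ i : Fin (Fintype.card V),
    ((∃ d : ℕ, (∃ j, j < i ∧ c (e j) = d) ∧
        AcyclicSet D (insert (e i) {v : V | ∃ j, j < i ∧ e j = v ∧ c v = d})) →
      ∃ j, j < i ∧ c (e j) = c (e i)) ∧
    ((¬ ∃ d : ℕ, (∃ j, j < i ∧ c (e j) = d) ∧
        AcyclicSet D (insert (e i) {v : V | ∃ j, j < i ∧ e j = v ∧ c v = d})) →
      c (e i) = sInf {m : ℕ | 1 ≤ m ∧ ∀ j, j < i → c (e j) ≠ m})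

/-- The parsimonious `e`-coloring number `dc_e(D)`: the minimum number of colors in a
parsimonious coloring along `e`. -/
noncomputable def parsimoniousNumber (D : Digraph V) [Fintype V]
    (e : Fin (Fintype.card V) ≃ V) : ℕ :=
  sInf {k : ℕ | ∃ c : V → ℕ, IsParsimonious D e c ∧ (Finset.univ.image c).card = k}

/-- The diochromatic number `dc^o(D)`: the maximum of the parsimonious coloring
numbers over all orderings of the vertices. -/
noncomputable def diochromatic (D : Digraph V) [Fintype V] : ℕ :=
  sSup {k : ℕ | ∃ e : Fin (Fintype.card V) ≃ V, parsimoniousNumber D e = k}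

end Paper

namespace Paper

/-! ### Consequences of greediness -/

/-- If adding `v` to an acyclic set creates a cycle, that cycle leaves `v` into the set. -/
lemma exists_out_of_not_acyclic {V : Type*} (D : Digraph V) (hD : ∀ v : V, ¬ D.Adj v v)
    {S : Set V} {v : V} (hS : AcyclicSet D S) (h : ¬ AcyclicSet D (insert v S)) :
    ∃ u ∈ S, D.Adj v u := by
  by_contra! hno
  apply h
  intro w hw
  have src : ∀ a b, Relation.TransGen
      (fun a b => a ∈ insert v S ∧ b ∈ insert v S ∧ D.Adj a b) a b → a ≠ v := by
    intro a b hab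
    obtain ⟨c, ⟨-, hc, hac⟩, -⟩ := Relation.TransGen.head'_iff.mp hab
    rintro rfl
    rcases hc with rfl | hc
    · exact hD _ hac
    · exact hno _ hc hac
  have key : ∀ a, Relation.TransGen
      (fun a b => a ∈ insert v S ∧ b ∈ insert v S ∧ D.Adj a b) a w →
      Relation.TransGen (fun a b => a ∈ S ∧ b ∈ S ∧ D.Adj a b) a w := by
    intro a ha
    induction ha using Relation.TransGen.head_induction_on with
    | single h' =>
      have h1 := src _ _ (.single h')
      have h2 := src _ _ hw
      exact .single ⟨h'.1.resolve_left h1, h'.2.1.resolve_left h2, h'.2.2⟩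
    | head h' h'' ih =>
      have h1 := src _ _ (.single h')
      have h2 := src _ _ h''
      exact .head ⟨h'.1.resolve_left h1, h'.2.1.resolve_left h2, h'.2.2⟩ ih
  exact hS w (key w hw)

lemma acyclicSet_reverse {V : Type*} (D : Digraph V) (S : Set V) :
    AcyclicSet (⟨fun a b => D.Adj b a⟩ : Digraph V) S ↔ AcyclicSet D S := by
  unfold AcyclicSet
  refine forall_congr' fun v => not_congr ?_
  rw [← Relation.transGen_swap]
  have : (Function.swap fun a b => a ∈ S ∧ b ∈ S ∧ D.Adj b a)
      = (fun a b => a ∈ S ∧ b ∈ S ∧ D.Adj a b) := by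
    funext a b
    simp only [Function.swap, eq_iff_iff]
    tauto
  rw [this]

lemma exists_in_of_not_acyclic {V : Type*} (D : Digraph V) (hD : ∀ v : V, ¬ D.Adj v v)
    {S : Set V} {v : V} (hS : AcyclicSet D S) (h : ¬ AcyclicSet D (insert v S)) :
    ∃ u ∈ S, D.Adj u v :=
  exists_out_of_not_acyclic (⟨fun a b => D.Adj b a⟩ : Digraph V) hD
    ((acyclicSet_reverse D S).mpr hS) (fun hrev => h ((acyclicSet_reverse D _).mp hrev))

/-- The part of color class `c` colored before position `i`. -/
def prefixClass {V : Type*} [Fintype V] (D : Digraph V) (e : Fin (Fintype.card V) ≃ V)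
    (i : Fin (Fintype.card V)) (c : ℕ) : Set V :=
  {v : V | ∃ j : Fin (Fintype.card V), ∃ _ : j < i, e j = v ∧ greedyColorAt D e j = c}

lemma greedyColorAt_eq {V : Type*} [Fintype V] (D : Digraph V) (e : Fin (Fintype.card V) ≃ V)
    (i : Fin (Fintype.card V)) :
    greedyColorAt D e i =
      sInf {c : ℕ | 1 ≤ c ∧ AcyclicSet D (insert (e i) (prefixClass D e i c))} := by
  rw [greedyColorAt]
  rfl

lemma acyclicSet_singleton {V : Type*} (D : Digraph V) (hD : ∀ v : V, ¬ D.Adj v v) (x : V) :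
    AcyclicSet D {x} := by
  intro w hw
  obtain ⟨c, ⟨h1, h2, h3⟩, -⟩ := Relation.TransGen.head'_iff.mp hw
  rw [Set.mem_singleton_iff] at h1 h2
  subst h1 h2
  exact hD _ h3

/-- The infimum defining a greedy color is attained: a color that is larger than every color in use
is always available. -/
lemma greedyColorAt_spec {V : Type*} [Fintype V] (D : Digraph V) (hD : ∀ v : V, ¬ D.Adj v v)
    (e : Fin (Fintype.card V) ≃ V) (i : Fin (Fintype.card V)) :
    1 ≤ greedyColorAt D e i ∧
      AcyclicSet D (insert (e i) (prefixClass D e i (greedyColorAt D e i))) := by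
  have hne : {c : ℕ | 1 ≤ c ∧ AcyclicSet D (insert (e i) (prefixClass D e i c))}.Nonempty := by
    refine ⟨(Finset.univ.sup (greedyColorAt D e)) + 1, by omega, ?_⟩
    have : prefixClass D e i ((Finset.univ.sup (greedyColorAt D e)) + 1) = ∅ := by
      rw [Set.eq_empty_iff_forall_notMem]
      rintro v ⟨j, -, -, hj⟩
      have := Finset.le_sup (f := greedyColorAt D e) (Finset.mem_univ j)
      omega
    rw [this]
    simpa using acyclicSet_singleton D hD (e i)
  have := Nat.sInf_mem hne
  rw [← greedyColorAt_eq] at this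
  exact this

lemma acyclicSet_prefixClass {V : Type*} [Fintype V] (D : Digraph V) (hD : ∀ v : V, ¬ D.Adj v v)
    (e : Fin (Fintype.card V) ≃ V) (i : Fin (Fintype.card V)) (c : ℕ) :
    AcyclicSet D (prefixClass D e i c) := by
  classical
  by_cases hne : (Finset.univ.filter fun j => j < i ∧ greedyColorAt D e j = c).Nonempty
  · -- The class equals the one obtained when its last vertex before position `i` was colored.
    obtain ⟨j, hj, hmax⟩ := Finset.exists_max_image _ id hne
    simp only [Finset.mem_filter, Finset.mem_univ, true_and, id] at hj hmax
    have h := (greedyColorAt_spec D hD e j).2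
    rw [hj.2] at h
    convert h using 1
    ext v
    constructor
    · rintro ⟨m, hm, rfl, hc⟩
      rcases (hmax m ⟨hm, hc⟩).eq_or_lt with rfl | hlt
      · exact Set.mem_insert _ _
      · exact Set.mem_insert_of_mem _ ⟨m, hlt, rfl, hc⟩
    · rintro (rfl | ⟨m, hm, rfl, hc⟩)
      · exact ⟨j, hj.1, rfl, hj.2⟩
      · exact ⟨m, hm.trans hj.1, rfl, hc⟩
  · intro w hw
    obtain ⟨-, ⟨⟨j, hj, -, hc⟩, -, -⟩, -⟩ := Relation.TransGen.head'_iff.mp hw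
    exact hne ⟨j, by simp [hj, hc]⟩

lemma greedyColoring_dominates {V : Type*} [Fintype V] (D : Digraph V)
    (hD : ∀ v : V, ¬ D.Adj v v) (e : Fin (Fintype.card V) ≃ V) (u v : V)
    (h : greedyColoring D e u < greedyColoring D e v) :
    (∃ w, greedyColoring D e w = greedyColoring D e u ∧ D.Adj v w) ∧
    (∃ w, greedyColoring D e w = greedyColoring D e u ∧ D.Adj w v) := by
  have h1 : 1 ≤ greedyColoring D e u := (greedyColorAt_spec D hD e _).1
  have hn : ¬ AcyclicSet D (insert v (prefixClass D e (e.symm v) (greedyColoring D e u))) := by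
    intro hac
    have h' : greedyColorAt D e (e.symm v) ≤ greedyColoring D e u := by
      rw [greedyColorAt_eq]
      exact Nat.sInf_le ⟨h1, by simpa using hac⟩
    exact absurd h (not_lt.mpr h')
  have hp := acyclicSet_prefixClass D hD e (e.symm v) (greedyColoring D e u)
  have hmem : ∀ w ∈ prefixClass D e (e.symm v) (greedyColoring D e u),
      greedyColoring D e w = greedyColoring D e u := by
    rintro w ⟨j, -, rfl, hj⟩
    simpa [greedyColoring] using hj
  obtain ⟨w, hw, hvw⟩ := exists_out_of_not_acyclic D hD hp hn
  obtain ⟨w', hw', hvw'⟩ := exists_in_of_not_acyclic D hD hp hn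
  exact ⟨⟨w, hmem w hw, hvw⟩, ⟨w', hmem w' hw', hvw'⟩⟩

lemma exists_greedyCount_eq_digrundy {V : Type*} [Fintype V] (D : Digraph V) :
    ∃ e : Fin (Fintype.card V) ≃ V, greedyCount D e = digrundy D := by
  have hne : {k : ℕ | ∃ e : Fin (Fintype.card V) ≃ V, greedyCount D e = k}.Nonempty :=
    ⟨_, (Fintype.equivFin V).symm, rfl⟩
  have hb : BddAbove {k : ℕ | ∃ e : Fin (Fintype.card V) ≃ V, greedyCount D e = k} := by
    refine ⟨Fintype.card V, ?_⟩
    rintro k ⟨e, rfl⟩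
    exact Finset.card_image_le
  exact Nat.sSup_mem hne hb

/-! ### Local structure of two dominated colorings -/

section Abstract

variable {V : Type*}

/-- The combinatorial trace of greediness: if `v` comes in a later class than `u` and is
`F`-related (completely non-adjacent) to all other vertices in the class of `u`, then `v` is
`E`-related (adjacent in both directions) to `u`. -/
def Dominated (E F : V → V → Prop) (f : V → ℕ) : Prop :=
  ∀ u v, f u < f v → (∀ w, f w = f u → w ≠ u → F v w) → E v u

/-- The color class of `x` is `{x}`. -/
def IsSingle (f : V → ℕ) (x : V) : Prop := ∀ w, f w = f x → w = x

/-- The color class of `y` is `{x, y}`, and it has two elements. -/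
def IsPair (f : V → ℕ) (x y : V) : Prop := x ≠ y ∧ f x = f y ∧ ∀ w, f w = f y → w = x ∨ w = y

/-- `y` lies outside `T`, and its color class is a pair completed by a vertex of `T`. -/
def IsMixed (f : V → ℕ) (T : V → Prop) (y : V) : Prop := ¬ T y ∧ ∃ x, T x ∧ IsPair f x y

variable {E F : V → V → Prop} {f g : V → ℕ}

lemma IsPair.symm {x y : V} (h : IsPair f x y) : IsPair f y x :=
  ⟨h.1.symm, h.2.1.symm, fun w hw => (h.2.2 w (hw.trans h.2.1)).symm⟩

lemma IsPair.not_single {x y : V} (h : IsPair f x y) : ¬ IsSingle f y :=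
  fun hs => h.1 (hs x h.2.1)

/-- A pair class seen from a later vertex. -/
lemma Dominated.pair_of_lt (H : Dominated E F f) {p q v : V} (hp : IsPair f p q)
    (hlt : f q < f v) (hF : F v p) : E v q :=
  H q v hlt fun w hw hwq => by
    rcases hp.2.2 w hw with rfl | rfl
    · exact hF
    · exact absurd rfl hwq

/-- For a vertex that is alone in its class, domination holds for all other classes, not only the
earlier ones. -/
lemma Dominated.single (hE : ∀ x y, E x y → E y x) (H : Dominated E F f) {x u : V}
    (hx : IsSingle f x) (hux : u ≠ x) (h : ∀ w, f w = f u → w ≠ u → F x w) : E x u := by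
  rcases lt_trichotomy (f u) (f x) with hlt | heq | hgt
  · exact H u x hlt h
  · exact absurd (hx u heq) hux
  · exact hE _ _ (H x u hgt fun w hw hwx => absurd (hx w hw) hwx)

lemma Dominated.single_pair (hE : ∀ x y, E x y → E y x) (H : Dominated E F f) {x p q : V}
    (hx : IsSingle f x) (hp : IsPair f p q) (hF : F x p) : E x q := by
  refine H.single hE hx ?_ fun w hw hwq => ?_
  · rintro rfl
    exact hp.not_single hx
  · rcases hp.2.2 w hw with rfl | rfl
    · exact hF
    · exact absurd rfl hwq

lemma Dominated.single_single (hE : ∀ x y, E x y → E y x) (H : Dominated E F f) {x y : V}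
    (hx : IsSingle f x) (hy : IsSingle f y) (hxy : x ≠ y) : E x y :=
  H.single hE hx hxy.symm fun w hw hwy => absurd (hy w hw) hwy

/-- At most one class of `f` consists of vertices that are alone in their `g`-class. -/
lemma Dominated.eq_of_subset (hF : ∀ x y, F x y → F y x) (hEF : ∀ x y, E x y → ¬ F x y)
    (H : Dominated E F f) (K : Dominated F E g) {u v : V}
    (hu : ∀ w, f w = f u → IsSingle g w) (hv : ∀ w, f w = f v → IsSingle g w) : f u = f v := by
  have key : ∀ u v : V, (∀ w, f w = f u → IsSingle g w) → (∀ w, f w = f v → IsSingle g w) →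
      ¬ f u < f v := by
    intro u v hu hv hlt
    have hFv : ∀ w, f w = f u → F v w := fun w hw =>
      K.single_single hF (hv v rfl) (hu w hw) (by rintro rfl; omega)
    exact hEF v u (H u v hlt fun w hw _ => hFv w hw) (hFv u rfl)
  have h1 := key u v hu hv
  have h2 := key v u hv hu
  omega

lemma single_inter_unique (hE : ∀ x y, E x y → E y x) (hF : ∀ x y, F x y → F y x)
    (hEF : ∀ x y, E x y → ¬ F x y) (H : Dominated E F f) (K : Dominated F E g) {x y : V}
    (hx : IsSingle f x) (hx' : IsSingle g x) (hy : IsSingle f y) (hy' : IsSingle g y) : x = y := by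
  by_contra hne
  exact hEF x y (H.single_single hE hx hy hne) (K.single_single hF hx' hy' hne)

/-- At most one vertex is mixed for both colorings. -/
lemma pairs_inter_unique (hE : ∀ x y, E x y → E y x) (hF : ∀ x y, F x y → F y x)
    (hEF : ∀ x y, E x y → ¬ F x y) (H : Dominated E F f) (K : Dominated F E g) {y y' : V}
    (h1 : IsMixed f (IsSingle g) y) (h2 : IsMixed g (IsSingle f) y)
    (h1' : IsMixed f (IsSingle g) y') (h2' : IsMixed g (IsSingle f) y') : y = y' := by
  have key : ∀ y₁ y₂ : V, IsMixed f (IsSingle g) y₁ → IsMixed g (IsSingle f) y₁ →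
      IsMixed f (IsSingle g) y₂ → IsMixed g (IsSingle f) y₂ → ¬ f y₁ < f y₂ := by
    rintro y₁ y₂ ⟨hT1, z₁, hz1, hp1⟩ ⟨hS1, x₁, hx1, hq1⟩ ⟨hT2, z₂, hz2, hp2⟩
      ⟨hS2, x₂, hx2, hq2⟩ hlt
    have hzz : z₂ ≠ z₁ := by
      rintro rfl
      have := hp1.2.1
      have := hp2.2.1
      omega
    have e1 : E z₂ y₁ := H.pair_of_lt hp1 (by rw [hp2.2.1]; exact hlt)
      (K.single_single hF hz2 hz1 hzz)
    have e2 : F z₂ x₁ := K.single_pair hF hz2 hq1.symm e1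
    have hgne : g y₁ ≠ g y₂ := by
      intro heq
      rcases hq2.2.2 y₁ heq with rfl | rfl
      · exact hS1 hx2
      · omega
    have hxx : x₂ ≠ x₁ := by
      rintro rfl
      exact hgne (hq1.2.1.symm.trans hq2.2.1)
    rcases lt_or_gt_of_ne hgne with hg | hg
    · have e3 : F x₂ y₁ := K.pair_of_lt hq1 (by rw [hq2.2.1]; exact hg)
        (H.single_single hE hx2 hx1 hxx)
      have e4 : E x₂ z₁ := H.single_pair hE hx2 hp1.symm e3
      have e5 : F z₁ y₂ := K.single_pair hF hz1 hq2 (hE _ _ e4)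
      have e6 : E x₁ y₂ := H.single_pair hE hx1 hp2 (hF _ _ e2)
      exact hEF _ _ (H.pair_of_lt hp1 hlt (hF _ _ e5)) (K.pair_of_lt hq1 hg (hE _ _ e6))
    · have e3 : F x₁ y₂ := K.pair_of_lt hq2 (by rw [hq1.2.1]; exact hg)
        (H.single_single hE hx1 hx2 hxx.symm)
      exact hEF _ _ (H.single_pair hE hx1 hp2.symm e3) (hF _ _ e2)
  have hle := key y y' h1 h2 h1' h2'
  have hge := key y' y h1' h2' h1 h2
  obtain ⟨hT, -⟩ := h1
  obtain ⟨-, z, hz, hp⟩ := h1'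
  rcases hp.2.2 y (by omega) with rfl | rfl
  · exact absurd hz hT
  · rfl

/-- A pair class inside `T` excludes vertices that are alone for both colorings. -/
lemma no_single_inter_of_pair (hE : ∀ x y, E x y → E y x) (hF : ∀ x y, F x y → F y x)
    (hEF : ∀ x y, E x y → ¬ F x y) (H : Dominated E F f) (K : Dominated F E g) {u v x : V}
    (hp : IsPair f u v) (hu : IsSingle g u) (hv : IsSingle g v)
    (hx : IsSingle f x) (hx' : IsSingle g x) : False := by
  have hxu : x ≠ u := by
    rintro rfl
    exact hp.symm.not_single hx
  have hxv : x ≠ v := by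
    rintro rfl
    exact hp.not_single hx
  exact hEF _ _ (H.single_pair hE hx hp (K.single_single hF hx' hu hxu))
    (K.single_single hF hx' hv hxv)

/-- A pair class inside `T` excludes vertices that are mixed for both colorings. -/
lemma no_mixed_inter_of_pair (hE : ∀ x y, E x y → E y x) (hF : ∀ x y, F x y → F y x)
    (hEF : ∀ x y, E x y → ¬ F x y) (H : Dominated E F f) (K : Dominated F E g) {u v y : V}
    (hp : IsPair f u v) (hu : IsSingle g u) (hv : IsSingle g v)
    (h1 : IsMixed f (IsSingle g) y) (h2 : IsMixed g (IsSingle f) y) : False := by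
  obtain ⟨hT, z₁, hz1, hp1⟩ := h1
  obtain ⟨hS, x₁, hx1, hq1⟩ := h2
  have hzy : f z₁ = f y := hp1.2.1
  have huv : f u = f v := hp.2.1
  have hne : f y ≠ f v := by
    intro heq
    rcases hp.2.2 y heq with rfl | rfl
    · exact hT hu
    · exact hT hv
  have hlt : f y < f v := by
    -- Otherwise `z₁` would be dominated by `{u, v}`, although all three lie in `T`.
    by_contra hnl
    have hzu : z₁ ≠ u := by
      rintro rfl
      omega
    have hzv : z₁ ≠ v := by
      rintro rfl
      omega
    exact hEF _ _ (H.pair_of_lt hp (v := z₁) (by omega) (K.single_single hF hz1 hu hzu))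
      (K.single_single hF hz1 hv hzv)
  have eT : ∀ w, IsSingle g w → f w = f v → F w x₁ := by
    intro w hw hwv
    have hwz : w ≠ z₁ := by
      rintro rfl
      omega
    have : E w y := H.pair_of_lt hp1 (by omega) (K.single_single hF hw hz1 hwz)
    exact K.single_pair hF hw hq1.symm this
  exact hEF _ _ (H.single_pair hE hx1 hp (hF _ _ (eT u hu huv))) (hF _ _ (eT v hv rfl))

/-! ### Counting -/

open Classical in
/-- The contribution of a single class to `four_mul_card_image`. -/
lemma class_count [Fintype V] (f : V → ℕ) (T : V → Prop) (v₀ : V) :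
    4 + ((Finset.univ.filter T).filter (fun v => f v = f v₀)).card ≤
      2 * (Finset.univ.filter (fun v => f v = f v₀)).card
      + 2 * ((Finset.univ.filter (IsSingle f)).filter (fun v => f v = f v₀)).card
      + ((Finset.univ.filter (IsMixed f T)).filter (fun v => f v = f v₀)).card
      + (if ∀ w, f w = f v₀ → T w then
          (if ∃ u v, IsPair f u v ∧ T u ∧ T v then 2 else 1) else 0) := by
  set C := Finset.univ.filter (fun v => f v = f v₀) with hC
  have hmC : ∀ v, v ∈ C ↔ f v = f v₀ := by simp [hC]
  have hv0 : v₀ ∈ C := by simp [hC]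
  have hpos : 1 ≤ C.card := Finset.card_pos.mpr ⟨v₀, hv0⟩
  set τ := (Finset.univ.filter T).filter (fun v => f v = f v₀) with hτ
  have hτC : τ ⊆ C := by
    intro v
    simp only [hτ, hC, Finset.mem_filter]
    tauto
  have hle := Finset.card_le_card hτC
  have hone : (∀ w, f w = f v₀ → T w) → 1 ≤ (if ∀ w, f w = f v₀ → T w then
          (if ∃ u v, IsPair f u v ∧ T u ∧ T v then 2 else 1) else 0) := by
    intro h
    rw [if_pos h]
    split_ifs <;> omega
  have hfull : τ.card = C.card → ∀ w, f w = f v₀ → T w := by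
    intro h w hw
    have : w ∈ τ := by
      rw [Finset.eq_of_subset_of_card_le hτC h.ge]
      exact (hmC w).mpr hw
    simp only [hτ, Finset.mem_filter] at this
    exact this.1.2
  rcases Nat.lt_or_ge C.card 2 with h1 | h2
  · have hs : IsSingle f v₀ := by
      intro w hw
      have : C.card ≤ 1 := by omega
      exact Finset.card_le_one.mp this w ((hmC w).mpr hw) v₀ hv0
    have : 1 ≤ ((Finset.univ.filter (IsSingle f)).filter (fun v => f v = f v₀)).card :=
      Finset.card_pos.mpr ⟨v₀, by simp [hs]⟩
    by_cases ht : τ.card = C.card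
    · have := hone (hfull ht)
      omega
    · omega
  rcases h2.eq_or_lt with h2 | h3
  · obtain ⟨a, b, hab, hCab⟩ := Finset.card_eq_two.mp h2.symm
    have ha : f a = f v₀ := (hmC a).mp (by simp [hCab])
    have hb : f b = f v₀ := (hmC b).mp (by simp [hCab])
    have hp : IsPair f a b := by
      refine ⟨hab, ha.trans hb.symm, fun w hw => ?_⟩
      have : w ∈ C := (hmC w).mpr (hw.trans hb)
      simpa [hCab] using this
    have hmix : ∀ y, f y = f v₀ → IsMixed f T y →
        1 ≤ ((Finset.univ.filter (IsMixed f T)).filter (fun v => f v = f v₀)).card :=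
      fun y hy hm => Finset.card_pos.mpr ⟨y, by simp [hy, hm]⟩
    by_cases hTa : T a <;> by_cases hTb : T b
    · have hall : ∀ w, f w = f v₀ → T w := by
        intro w hw
        rcases hp.2.2 w (hw.trans hb.symm) with rfl | rfl <;> assumption
      rw [if_pos hall, if_pos ⟨a, b, hp, hTa, hTb⟩]
      omega
    · have := hmix b hb ⟨hTb, a, hTa, hp⟩
      by_cases ht : τ.card = C.card
      · exact absurd (hfull ht b hb) hTb
      · omega
    · have := hmix a ha ⟨hTa, b, hTb, hp.symm⟩
      by_cases ht : τ.card = C.card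
      · exact absurd (hfull ht a ha) hTa
      · omega
    · have : τ = ∅ := by
        rw [Finset.eq_empty_iff_forall_notMem]
        intro w hw
        have hwC := hτC hw
        simp only [hτ, Finset.mem_filter] at hw
        rw [hCab, Finset.mem_insert, Finset.mem_singleton] at hwC
        rcases hwC with rfl | rfl
        · exact hTa hw.1.2
        · exact hTb hw.1.2
      rw [this, Finset.card_empty]
      omega
  · by_cases ht : τ.card = C.card
    · have := hone (hfull ht)
      omega
    · omega

open Classical in
lemma four_mul_card_image [Fintype V] (f : V → ℕ) (T : V → Prop)
    (huniq : ∀ u v, (∀ w, f w = f u → T w) → (∀ w, f w = f v → T w) → f u = f v) :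
    4 * (Finset.univ.image f).card + (Finset.univ.filter T).card ≤
      2 * Fintype.card V + 2 * (Finset.univ.filter (IsSingle f)).card
      + (Finset.univ.filter (IsMixed f T)).card
      + (if ∃ u v, IsPair f u v ∧ T u ∧ T v then 2 else 1) := by
  have hfib : ∀ A : Finset V,
      A.card = ∑ i ∈ Finset.univ.image f, (A.filter (fun v => f v = i)).card := fun A =>
    Finset.card_eq_sum_card_fiberwise fun v _ => by simp
  set d := if ∃ u v, IsPair f u v ∧ T u ∧ T v then 2 else 1
  have hd : ∑ i ∈ Finset.univ.image f, (if ∀ w, f w = i → T w then d else 0) ≤ d := by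
    rw [← Finset.sum_filter, Finset.sum_const, smul_eq_mul]
    have : ((Finset.univ.image f).filter fun i => ∀ w, f w = i → T w).card ≤ 1 := by
      rw [Finset.card_le_one]
      intro i hi j hj
      simp only [Finset.mem_filter, Finset.mem_image, Finset.mem_univ, true_and] at hi hj
      obtain ⟨⟨u, rfl⟩, hu⟩ := hi
      obtain ⟨⟨v, rfl⟩, hv⟩ := hj
      exact huniq u v hu hv
    calc _ ≤ 1 * d := Nat.mul_le_mul_right d this
      _ = d := one_mul d
  have hsum := Finset.sum_le_sum (s := Finset.univ.image f)
    (f := fun i => 4 + ((Finset.univ.filter T).filter (fun v => f v = i)).card)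
    (g := fun i => 2 * (Finset.univ.filter (fun v => f v = i)).card
      + 2 * ((Finset.univ.filter (IsSingle f)).filter (fun v => f v = i)).card
      + ((Finset.univ.filter (IsMixed f T)).filter (fun v => f v = i)).card
      + (if ∀ w, f w = i → T w then d else 0)) (by
        intro i hi
        obtain ⟨v₀, -, rfl⟩ := Finset.mem_image.mp hi
        exact class_count f T v₀)
  simp only [Finset.sum_add_distrib, ← Finset.mul_sum, Finset.sum_const, smul_eq_mul] at hsum
  rw [← hfib, ← hfib, ← hfib, ← hfib, Finset.card_univ] at hsum
  omega

open Classical in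
lemma card_image_add_card_image [Fintype V] (hE : ∀ x y, E x y → E y x)
    (hF : ∀ x y, F x y → F y x) (hEF : ∀ x y, E x y → ¬ F x y) (H : Dominated E F f)
    (K : Dominated F E g) :
    4 * ((Finset.univ.image f).card + (Finset.univ.image g).card) ≤ 5 * Fintype.card V + 4 := by
  have hFE : ∀ x y, F x y → ¬ E x y := fun x y h h' => hEF x y h' h
  have A := four_mul_card_image f (IsSingle g) fun u v => H.eq_of_subset hF hEF K
  have B := four_mul_card_image g (IsSingle f) fun u v => K.eq_of_subset hE hFE H
  set S := Finset.univ.filter (IsSingle f) with hS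
  set T := Finset.univ.filter (IsSingle g) with hT
  set Z := Finset.univ.filter (IsMixed f (IsSingle g)) with hZ
  set Y := Finset.univ.filter (IsMixed g (IsSingle f)) with hY
  have hdisj : Disjoint (S ∪ T) (Y ∪ Z) := by
    rw [Finset.disjoint_left]
    intro v hv hv'
    simp only [hS, hT, hZ, hY, Finset.mem_union, Finset.mem_filter, Finset.mem_univ,
      true_and] at hv hv'
    rcases hv' with ⟨h, x, -, hp⟩ | ⟨h, x, -, hp⟩
    · exact hv.elim h hp.not_single
    · exact hv.elim hp.not_single h
  have hle : (S ∪ T).card + (Y ∪ Z).card ≤ Fintype.card V := by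
    rw [← Finset.card_union_of_disjoint hdisj]
    exact Finset.card_le_univ _
  have c1 := Finset.card_union_add_card_inter S T
  have c2 := Finset.card_union_add_card_inter Y Z
  have hST : (S ∩ T).card ≤ 1 := by
    rw [Finset.card_le_one]
    intro x hx y hy
    simp only [hS, hT, Finset.mem_inter, Finset.mem_filter, Finset.mem_univ, true_and] at hx hy
    exact single_inter_unique hE hF hEF H K hx.1 hx.2 hy.1 hy.2
  have hYZ : (Y ∩ Z).card ≤ 1 := by
    rw [Finset.card_le_one]
    intro x hx y hy
    simp only [hY, hZ, Finset.mem_inter, Finset.mem_filter, Finset.mem_univ, true_and] at hx hy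
    exact pairs_inter_unique hE hF hEF H K hx.2 hx.1 hy.2 hy.1
  have hf : (∃ u v, IsPair f u v ∧ IsSingle g u ∧ IsSingle g v) →
      (S ∩ T).card = 0 ∧ (Y ∩ Z).card = 0 := by
    rintro ⟨u, v, hp, hu, hv⟩
    simp only [Finset.card_eq_zero, Finset.eq_empty_iff_forall_notMem, hS, hT, hY, hZ,
      Finset.mem_inter, Finset.mem_filter, Finset.mem_univ, true_and]
    exact ⟨fun x hx => no_single_inter_of_pair hE hF hEF H K hp hu hv hx.1 hx.2,
      fun y hy => no_mixed_inter_of_pair hE hF hEF H K hp hu hv hy.2 hy.1⟩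
  have hg : (∃ u v, IsPair g u v ∧ IsSingle f u ∧ IsSingle f v) →
      (S ∩ T).card = 0 ∧ (Y ∩ Z).card = 0 := by
    rintro ⟨u, v, hp, hu, hv⟩
    simp only [Finset.card_eq_zero, Finset.eq_empty_iff_forall_notMem, hS, hT, hY, hZ,
      Finset.mem_inter, Finset.mem_filter, Finset.mem_univ, true_and]
    exact ⟨fun x hx => no_single_inter_of_pair hF hE hFE K H hp hu hv hx.2 hx.1,
      fun y hy => no_mixed_inter_of_pair hF hE hFE K H hp hu hv hy.1 hy.2⟩
  split_ifs at A B with a b b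
  · have := hf a
    omega
  · have := hf a
    omega
  · have := hg b
    omega
  · omega

end Abstract

/-! ### Digraphs -/

/-- If `D` is a digraph of order `n`, then
`dG(D) + dG(Dᶜ) ≤ ⌊(5n + 4)/4⌋`.  (Natural-number division is the floor.) -/
theorem digrundy_nordhaus_gaddum_general {V : Type*} [Fintype V]
    (D : Digraph V) (hD : ∀ v : V, ¬ D.Adj v v) :
    digrundy D + digrundy (digraphCompl D) ≤ (5 * Fintype.card V + 4) / 4 := by
  obtain ⟨e, he⟩ := exists_greedyCount_eq_digrundy D
  obtain ⟨e', he'⟩ := exists_greedyCount_eq_digrundy (digraphCompl D)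
  have hDc : ∀ v : V, ¬ (digraphCompl D).Adj v v := fun v h => h.1 rfl
  have key := card_image_add_card_image
    (E := fun u v => D.Adj u v ∧ D.Adj v u)
    (F := fun u v => (digraphCompl D).Adj u v ∧ (digraphCompl D).Adj v u)
    (f := greedyColoring D e) (g := greedyColoring (digraphCompl D) e')
    (fun _ _ h => h.symm) (fun _ _ h => h.symm) (fun _ _ h h' => h'.1.2 h.1)
    (by
      intro u v hlt hF
      obtain ⟨⟨w, hw, hvw⟩, ⟨w', hw', hvw'⟩⟩ := greedyColoring_dominates D hD e u v hlt
      have h1 : w = u := by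
        by_contra hne
        exact (hF w hw hne).1.2 hvw
      have h2 : w' = u := by
        by_contra hne
        exact (hF w' hw' hne).2.2 hvw'
      subst h1
      subst h2
      exact ⟨hvw, hvw'⟩)
    (by
      intro u v hlt hF
      obtain ⟨⟨w, hw, hvw⟩, ⟨w', hw', hvw'⟩⟩ := greedyColoring_dominates _ hDc e' u v hlt
      have h1 : w = u := by
        by_contra hne
        exact hvw.2 (hF w hw hne).1
      have h2 : w' = u := by
        by_contra hne
        exact hvw'.2 (hF w' hw' hne).2
      subst h1
      subst h2
      exact ⟨hvw, hvw'⟩)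
  rw [Nat.le_div_iff_mul_le (by norm_num), ← he, ← he']
  unfold greedyCount
  omega

end Paper
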